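/- If the Poisson bivector Π of a Poisson vector space (V, Π, W, ⟨·,·⟩) is weakly non-degenerate as a bilinear form on W, then the associated CCR algebra A(V,Π,W,⟨·,·⟩) is simple: its only two-sided ideals are {0} and the whole algebra. -/

import Mathlib

universe u

/-- The CCR relations for a map `A : W → B` into a unital complex `*`-algebra, relative to a
bilinear antisymmetric form `Pb` on `W`: real linearity, hermiticity, and the canonical
commutation relations `[A x, A y] = i Pb(x,y) 𝟙`. -/
def CCRRel {W : Type*} [AddCommGroup W] [Module ℝ W] (Pb : W →ₗ[ℝ] W →ₗ[ℝ] ℝ)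
    {B : Type*} [Ring B] [Algebra ℂ B] [StarRing B] [StarModule ℂ B] (A : W → B) : Prop :=
  (∀ (a b : ℝ) (x y : W), A (a • x + b • y) = (a : ℂ) • A x + (b : ℂ) • A y) ∧
  (∀ x : W, star (A x) = A x) ∧
  (∀ x y : W, A x * A y - A y * A x = algebraMap ℂ B (Complex.I * (Pb x y : ℂ)))

/-- `𝒜` together with the generators `A : W → 𝒜` is *the* CCR algebra of `(W, Pb)`:
the generators satisfy the CCR relations, and the pair `(𝒜, A)` has the universal property
of the unital `*`-algebra presented by these generators and relations. -/
def IsCCRAlgebra {W : Type*} [AddCommGroup W] [Module ℝ W] (Pb : W →ₗ[ℝ] W →ₗ[ℝ] ℝ)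
    (𝒜 : Type u) [Ring 𝒜] [Algebra ℂ 𝒜] [StarRing 𝒜] [StarModule ℂ 𝒜] (A : W → 𝒜) : Prop :=
  CCRRel Pb A ∧
  ∀ (B : Type u) [Ring B] [Algebra ℂ B] [StarRing B] [StarModule ℂ B],
    ∀ A' : W → B, CCRRel Pb A' → ∃! h : 𝒜 →⋆ₐ[ℂ] B, ∀ x, h (A x) = A' x

namespace CCRAux

/-- Span of `1` and a set of generators. -/
def M {R : Type*} [Ring R] [Algebra ℂ R] (S : Set R) : Submodule ℂ R :=
  Submodule.span ℂ (insert 1 S)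

/-- Shifted degree filtration. -/
def G {R : Type*} [Ring R] [Algebra ℂ R] (S : Set R) : ℕ → Submodule ℂ R
  | 0 => ⊥
  | n + 1 => M S ^ n

section
variable {R : Type*} [Ring R] [Algebra ℂ R]

lemma one_mem_M (S : Set R) : (1 : R) ∈ M S := Submodule.subset_span (Set.mem_insert _ _)

lemma one_le_M (S : Set R) : (1 : Submodule ℂ R) ≤ M S :=
  Submodule.one_le.2 (one_mem_M S)

lemma M_mono {S T : Set R} (h : S ⊆ T) : M S ≤ M T :=
  Submodule.span_mono (Set.insert_subset_insert h)

lemma pow_M_mono (S : Set R) {m n : ℕ} (h : m ≤ n) : M S ^ m ≤ M S ^ n :=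
  pow_le_pow_right' (one_le_M S) h

lemma G_le_succ (S : Set R) (n : ℕ) : G S n ≤ G S (n + 1) := by
  cases n with
  | zero => exact bot_le
  | succ n => exact pow_M_mono S (Nat.le_succ n)

lemma mul_G (S : Set R) (n : ℕ) {m b : R} (hm : m ∈ M S) (hb : b ∈ G S n) :
    m * b ∈ G S (n + 1) := by
  cases n with
  | zero =>
    have : b = 0 := by simpa [G] using hb
    subst this; simp
  | succ n =>
    change m * b ∈ M S ^ (n + 1)
    rw [pow_succ']
    exact Submodule.mul_mem_mul hm hb

/-- Induction principle for the filtration. -/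
lemma G_induction (S : Set R) (n : ℕ) {p : R → Prop}
    (hone : ∀ b ∈ G S (n + 1), p b) (hS : ∀ s ∈ S, ∀ b ∈ G S (n + 1), p (s * b))
    (hadd : ∀ a b, p a → p b → p (a + b)) (hsmul : ∀ (c : ℂ) a, p a → p (c • a)) :
    ∀ a ∈ G S (n + 2), p a := by
  intro a ha
  change a ∈ M S ^ (n + 1) at ha
  rw [pow_succ'] at ha
  refine Submodule.mul_induction_on ha ?_ hadd
  intro m hm b hb
  induction hm using Submodule.span_induction with
  | mem x hx =>
    rcases hx with rfl | hx
    · simpa using hone b hb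
    · exact hS x hx b hb
  | zero => 
    have := hsmul 0 _ (hone b hb)
    simpa using this
  | add x y _ _ hx hy => rw [add_mul]; exact hadd _ _ hx hy
  | smul c x _ hx => rw [smul_mul_assoc]; exact hsmul c _ hx

lemma G_one (S : Set R) {a : R} (ha : a ∈ G S 1) : ∃ c : ℂ, algebraMap ℂ R c = a := by
  change a ∈ M S ^ 0 at ha
  rw [pow_zero] at ha
  exact Submodule.mem_one.1 ha

/-- Commutators with an element whose commutators with the generators are scalars
lower the degree. -/
lemma comm_mem (S : Set R) (f : R) (hf : ∀ s ∈ S, ∃ c : ℂ, f * s - s * f = algebraMap ℂ R c)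
    (n : ℕ) : ∀ a ∈ G S (n + 1), f * a - a * f ∈ G S n := by
  induction n with
  | zero =>
    intro a ha
    obtain ⟨c, rfl⟩ := G_one S ha
    rw [Algebra.commutes c f, sub_self]
    exact zero_mem _
  | succ n ih =>
    refine G_induction S n ?_ ?_ ?_ ?_
    · intro b hb
      exact G_le_succ S n (ih b hb)
    · intro s hs b hb
      obtain ⟨c, hc⟩ := hf s hs
      have : f * (s * b) - s * b * f = c • b + s * (f * b - b * f) := by
        rw [Algebra.smul_def, ← hc]; noncomm_ring
      rw [this]
      exact add_mem (Submodule.smul_mem _ _ hb)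
        (mul_G S n (Submodule.subset_span (Set.mem_insert_of_mem _ hs)) (ih b hb))
    · intro a b ha hb
      have : f * (a + b) - (a + b) * f = (f * a - a * f) + (f * b - b * f) := by noncomm_ring
      rw [this]; exact add_mem ha hb
    · intro c a ha
      have : f * (c • a) - (c • a) * f = c • (f * a - a * f) := by
        rw [mul_smul_comm, smul_mul_assoc, smul_sub]
      rw [this]; exact Submodule.smul_mem _ _ ha

variable {κ : Type*} [Fintype κ] [DecidableEq κ]

/-- The Euler operator. -/
def E (e f : κ → R) : R →ₗ[ℂ] R :=
  ∑ i, LinearMap.mulLeft ℂ (e i) ∘ₗ (LinearMap.mulLeft ℂ (f i) - LinearMap.mulRight ℂ (f i))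

lemma E_apply (e f : κ → R) (a : R) : E e f a = ∑ i, e i * (f i * a - a * f i) := by
  simp [E]

lemma euler (e f : κ → R)
    (hfe : ∀ i j, f i * e j - e j * f i = if i = j then 1 else 0)
    (hee : ∀ i j, ∃ c : ℂ, e i * e j - e j * e i = algebraMap ℂ R c) (n : ℕ) :
    ∀ a ∈ G (Set.range e) (n + 1), E e f a - (n : ℂ) • a ∈ G (Set.range e) n := by
  have hf : ∀ i, ∀ s ∈ Set.range e, ∃ c : ℂ, f i * s - s * f i = algebraMap ℂ R c := by
    rintro i _ ⟨j, rfl⟩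
    refine ⟨if i = j then 1 else 0, ?_⟩
    rw [hfe]; split_ifs <;> simp
  induction n with
  | zero =>
    intro a ha
    obtain ⟨c, rfl⟩ := G_one _ ha
    have : E e f (algebraMap ℂ R c) = 0 := by
      rw [E_apply]
      refine Finset.sum_eq_zero fun i _ => ?_
      rw [Algebra.commutes c (f i), sub_self, mul_zero]
    rw [this]; simp
  | succ n ih =>
    refine G_induction _ n ?_ ?_ ?_ ?_
    · intro b hb
      have : E e f b - ((n + 1 : ℕ) : ℂ) • b = (E e f b - (n : ℂ) • b) - b := by
        push_cast; rw [add_smul, one_smul]; abel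
      rw [this]
      exact sub_mem (G_le_succ _ n (ih b hb)) hb
    · rintro _ ⟨j, rfl⟩ b hb
      choose c hc using hee
      have key : ∀ i, e i * (f i * (e j * b) - e j * b * f i) =
          (if i = j then e j * b else 0) + e j * (e i * (f i * b - b * f i))
            + c i j • (f i * b - b * f i) := by
        intro i
        have h1 : e i * (f i * (e j * b) - e j * b * f i) =
          e i * (f i * e j - e j * f i) * b + e j * (e i * (f i * b - b * f i))
            + (e i * e j - e j * e i) * (f i * b - b * f i) := by noncomm_ring
        rw [h1, hfe, hc, Algebra.smul_def]
        split_ifs with h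
        · subst h; simp
        · simp
      have : E e f (e j * b) - ((n + 1 : ℕ) : ℂ) • (e j * b) =
          e j * (E e f b - (n : ℂ) • b) + ∑ i, c i j • (f i * b - b * f i) := by
        rw [E_apply, E_apply, Finset.sum_congr rfl (fun i _ => key i), Finset.sum_add_distrib,
          Finset.sum_add_distrib, ← Finset.mul_sum]
        simp only [Finset.sum_ite_eq', Finset.mem_univ, if_true]
        push_cast
        rw [add_smul, one_smul, mul_sub, mul_smul_comm]
        abel
      rw [this]
      refine add_mem (mul_G _ n (Submodule.subset_span (Set.mem_insert_of_mem _ ⟨j, rfl⟩))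
        (ih b hb)) (Submodule.sum_mem _ fun i _ => Submodule.smul_mem _ _ ?_)
      exact G_le_succ _ n (comm_mem _ (f i) (hf i) n b hb)
    · intro a b ha hb
      have : E e f (a + b) - ((n + 1 : ℕ) : ℂ) • (a + b) =
        (E e f a - ((n + 1 : ℕ) : ℂ) • a) + (E e f b - ((n + 1 : ℕ) : ℂ) • b) := by
        rw [map_add, smul_add]; abel
      rw [this]; exact add_mem ha hb
    · intro c a ha
      have : E e f (c • a) - ((n + 1 : ℕ) : ℂ) • (c • a) =
        c • (E e f a - ((n + 1 : ℕ) : ℂ) • a) := by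
        rw [map_smul, smul_sub, smul_comm c]
      rw [this]; exact Submodule.smul_mem _ _ ha

lemma one_mem_of_mem (e f : κ → R)
    (hfe : ∀ i j, f i * e j - e j * f i = if i = j then 1 else 0)
    (hee : ∀ i j, ∃ c : ℂ, e i * e j - e j * e i = algebraMap ℂ R c)
    (I : TwoSidedIdeal R) (n : ℕ) :
    ∀ a ∈ G (Set.range e) n, a ∈ I → a ≠ 0 → (1 : R) ∈ I := by
  have hf : ∀ i, ∀ s ∈ Set.range e, ∃ c : ℂ, f i * s - s * f i = algebraMap ℂ R c := by
    rintro i _ ⟨j, rfl⟩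
    refine ⟨if i = j then 1 else 0, ?_⟩
    rw [hfe]; split_ifs <;> simp
  induction n with
  | zero => intro a ha _ h0; exact absurd (by simpa [G] using ha) h0
  | succ n ih =>
    intro a ha haI h0
    by_cases h : ∀ i, f i * a - a * f i = 0
    · have hE : E e f a = 0 := by
        rw [E_apply]; exact Finset.sum_eq_zero fun i _ => by rw [h i, mul_zero]
      have h2 := euler e f hfe hee n a ha
      rw [hE, zero_sub, neg_mem_iff] at h2
      rcases Nat.eq_zero_or_pos n with rfl | hn
      · obtain ⟨c, rfl⟩ := G_one _ ha
        have hc : c ≠ 0 := by rintro rfl; simp at h0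
        have := I.mul_mem_left (algebraMap ℂ R c⁻¹) _ haI
        rwa [← map_mul, inv_mul_cancel₀ hc, map_one] at this
      · have hn' : (n : ℂ) ≠ 0 := by exact_mod_cast hn.ne'
        exact ih a ((Submodule.smul_mem_iff _ hn').1 h2) haI h0
    · push Not at h
      obtain ⟨i, hi⟩ := h
      exact ih _ (comm_mem _ (f i) (hf i) n a ha)
        (I.sub_mem (I.mul_mem_left _ _ haI) (I.mul_mem_right _ _ haI)) hi

/-- Every element of the generated algebra lies in a filtration step of finitely many generators. -/
lemma exists_finset {ι : Type*} (e : ι → R) (a : R) (ha : a ∈ Algebra.adjoin ℂ (Set.range e)) :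
    ∃ (s : Finset ι) (n : ℕ), a ∈ M (e '' s) ^ n := by
  classical
  have mono : ∀ {s t : Finset ι} {m n : ℕ}, s ⊆ t → m ≤ n → M (e '' s) ^ m ≤ M (e '' t) ^ n :=
    fun h h' => (pow_le_pow_left' (M_mono (Set.image_mono (by exact_mod_cast h))) _).trans
      (pow_M_mono _ h')
  induction ha using Algebra.adjoin_induction with
  | mem x hx =>
    obtain ⟨i, rfl⟩ := hx
    refine ⟨{i}, 1, ?_⟩
    rw [pow_one]
    exact Submodule.subset_span (by simp)
  | algebraMap r =>
    refine ⟨∅, 0, ?_⟩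
    rw [pow_zero]
    exact Submodule.mem_one.2 ⟨r, rfl⟩
  | add x y _ _ hx hy =>
    obtain ⟨s, m, hx⟩ := hx
    obtain ⟨t, n, hy⟩ := hy
    exact ⟨s ∪ t, max m n, add_mem (mono Finset.subset_union_left (le_max_left _ _) hx)
      (mono Finset.subset_union_right (le_max_right _ _) hy)⟩
  | mul x y _ _ hx hy =>
    obtain ⟨s, m, hx⟩ := hx
    obtain ⟨t, n, hy⟩ := hy
    refine ⟨s ∪ t, m + n, ?_⟩
    rw [pow_add]
    exact Submodule.mul_mem_mul (mono Finset.subset_union_left le_rfl hx)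
      (mono Finset.subset_union_right le_rfl hy)

end

/-- Dual family with respect to a weakly nondegenerate form. -/
lemma exists_dual {W : Type*} [AddCommGroup W] [Module ℝ W] (Pb : W →ₗ[ℝ] W →ₗ[ℝ] ℝ)
    (hnd : ∀ y : W, (∀ x : W, Pb x y = 0) → y = 0) {κ : Type*} [Fintype κ] [DecidableEq κ]
    (e : κ → W) (he : LinearIndependent ℝ e) :
    ∃ f : κ → W, ∀ i j, Pb (f i) (e j) = if i = j then 1 else 0 := by
  let L : W →ₗ[ℝ] (κ → ℝ) := LinearMap.pi fun j => Pb.flip (e j)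
  have hL : LinearMap.range L = ⊤ := by
    by_contra hne
    obtain ⟨φ, hφ, hle⟩ := Submodule.exists_le_ker_of_lt_top _ (lt_top_iff_ne_top.2 hne)
    have hsum : ∀ v : κ → ℝ, φ v = ∑ j, v j * φ (Pi.single j 1) := by
      intro v
      conv_lhs => rw [pi_eq_sum_univ' v]
      simp [map_sum]
    have h0 : ∑ j, φ (Pi.single j 1) • e j = 0 := by
      apply hnd
      intro x
      have h1 : φ (L x) = 0 := hle ⟨x, rfl⟩
      rw [hsum] at h1
      rw [map_sum, ← h1]
      refine Finset.sum_congr rfl fun j _ => ?_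
      simp [L, mul_comm]
    have h2 := Fintype.linearIndependent_iff.1 he _ h0
    apply hφ
    ext v
    simp [h2]
  have hs := LinearMap.range_eq_top.1 hL
  choose f hf using fun i : κ => hs (fun j => if i = j then 1 else 0)
  exact ⟨f, fun i j => congrFun (hf i) j⟩

/-- The generators generate. -/
lemma adjoin_eq_top {W : Type*} [AddCommGroup W] [Module ℝ W] (Pb : W →ₗ[ℝ] W →ₗ[ℝ] ℝ)
    {𝒜 : Type u} [Ring 𝒜] [Algebra ℂ 𝒜] [StarRing 𝒜] [StarModule ℂ 𝒜]
    (A : W → 𝒜) (hCCR : IsCCRAlgebra Pb 𝒜 A) (a : 𝒜) :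
    a ∈ Algebra.adjoin ℂ (Set.range A) := by
  obtain ⟨⟨h1, h2, h3⟩, huniv⟩ := hCCR
  let S : StarSubalgebra ℂ 𝒜 := StarAlgebra.adjoin ℂ (Set.range A)
  have hmem : ∀ x, A x ∈ S := fun x => StarAlgebra.subset_adjoin ℂ _ ⟨x, rfl⟩
  obtain ⟨h, hh, -⟩ := huniv S (fun x => ⟨A x, hmem x⟩)
    ⟨fun a b x y => Subtype.ext (h1 a b x y), fun x => Subtype.ext (h2 x),
      fun x y => Subtype.ext (h3 x y)⟩
  have heq : S.subtype.comp h = StarAlgHom.id ℂ 𝒜 := by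
    refine (huniv 𝒜 A ⟨h1, h2, h3⟩).unique ?_ ?_
    · intro x; simp [hh]
    · intro x; rfl
  have haS : a ∈ S := by
    have := congrArg (fun g => g a) heq
    have h' : ((h a : S) : 𝒜) = a := this
    rw [← h']; exact (h a).2
  have hstar : star (Set.range A) = Set.range A := by
    ext x
    rw [Set.mem_star]
    constructor
    · rintro ⟨y, hy⟩; exact ⟨y, by rw [← h2, hy, star_star]⟩
    · rintro ⟨y, rfl⟩; exact ⟨y, (h2 y).symm⟩
  rw [← StarSubalgebra.mem_toSubalgebra, StarAlgebra.adjoin_toSubalgebra, hstar,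
    Set.union_self] at haS
  exact haS

end CCRAux

/-- If the Poisson bivector `Pb` of a Poisson vector space `(V, Pb, W, pair)` is weakly
non-degenerate on `W`, then the associated CCR algebra is simple: its only two-sided ideals
are `⊥ = {0}` and `⊤` (the whole algebra). -/
theorem stmt_12 {W : Type*} [AddCommGroup W] [Module ℝ W]
    {V : Type*} [AddCommGroup V] [Module ℝ V]
    (pair : W →ₗ[ℝ] V →ₗ[ℝ] ℝ)
    (hpair₁ : ∀ x : W, (∀ y : V, pair x y = 0) → x = 0)
    (hpair₂ : ∀ y : V, (∀ x : W, pair x y = 0) → y = 0)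
    (Pb : W →ₗ[ℝ] W →ₗ[ℝ] ℝ)
    (hanti : ∀ x y : W, Pb x y = - Pb y x)
    (hnd : ∀ y : W, (∀ x : W, Pb x y = 0) → y = 0)
    {𝒜 : Type u} [Ring 𝒜] [Algebra ℂ 𝒜] [StarRing 𝒜] [StarModule ℂ 𝒜]
    (A : W → 𝒜) (hCCR : IsCCRAlgebra Pb 𝒜 A) :
    ∀ I : TwoSidedIdeal 𝒜, I = ⊥ ∨ I = ⊤ := by
  classical
  intro I
  by_cases hI : I = ⊥
  · exact Or.inl hI
  right
  have hne : ∃ a ∈ I, a ≠ 0 := by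
    by_contra hcon
    push Not at hcon
    apply hI
    rw [eq_bot_iff]
    intro a ha
    rw [hcon a ha]
    exact zero_mem _
  obtain ⟨a, haI, ha0⟩ := hne
  have hgen := CCRAux.adjoin_eq_top Pb A hCCR a
  obtain ⟨⟨h1, h2, h3⟩, -⟩ := hCCR
  let AL : W →ₗ[ℝ] 𝒜 :=
    { toFun := A
      map_add' := fun x y => by simpa using h1 1 1 x y
      map_smul' := fun r x => by simpa using h1 r 0 x 0 }
  let b := Module.Basis.ofVectorSpace ℝ W
  have hle : Algebra.adjoin ℂ (Set.range A) ≤ Algebra.adjoin ℂ (Set.range fun i => A (b i)) := by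
    refine Algebra.adjoin_le ?_
    rintro _ ⟨x, rfl⟩
    change AL x ∈ _
    have hx : x ∈ Submodule.span ℝ (Set.range b) := b.mem_span x
    induction hx using Submodule.span_induction with
    | zero => rw [map_zero]; exact zero_mem _
    | mem y hy => obtain ⟨i, rfl⟩ := hy; exact Algebra.subset_adjoin ⟨i, rfl⟩
    | add x y _ _ hx hy => rw [map_add]; exact add_mem hx hy
    | smul r x _ hx =>
      have : AL (r • x) = (r : ℂ) • AL x := by simpa using h1 r 0 x 0
      rw [this]
      exact Subalgebra.smul_mem _ hx _
  obtain ⟨s, n, hs⟩ := CCRAux.exists_finset _ a (hle hgen)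
  obtain ⟨f, hf⟩ := CCRAux.exists_dual Pb hnd (fun i : s => b i)
    (b.linearIndependent.comp _ Subtype.val_injective)
  have hrange : (fun i => A (b i)) '' (s : Set _) = Set.range (fun i : s => A (b i)) := by
    ext x; simp
  rw [hrange] at hs
  have h1I : (1 : 𝒜) ∈ I := by
    refine CCRAux.one_mem_of_mem (fun i : s => A (b i)) (fun i => (-Complex.I) • A (f i))
      ?_ ?_ I (n + 1) a hs haI ha0
    · intro i j
      rw [smul_mul_assoc, mul_smul_comm, ← smul_sub, h3, hf, Algebra.smul_def, ← map_mul]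
      split_ifs <;> simp
    · intro i j
      exact ⟨_, h3 _ _⟩
  rw [eq_top_iff]
  intro x _
  simpa using I.mul_mem_left x 1 h1I
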